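/- arXiv:2109.08397 — 2 statements merged into one kernel-verified Lean document; each statement's English description precedes it below -/
import Mathlib

section
/- (Conditional mean of RWI increments.) For every n ≥ 0, almost surely E[ξ_{n+1} | F_n] = μ + θ·ε_n, where ε_n = 1_{S_n∈V_0} − 1_{S_n∈V_1}. -/
open MeasureTheory ProbabilityTheory Real Filter Set
open scoped BigOperators NNReal

noncomputable section

namespace RWI

abbrev E : Type := EuclideanSpace ℝ (Fin 3)

def vec (x y z : ℝ) : E := (EuclideanSpace.equiv (Fin 3) ℝ).symm ![x, y, z]

/-- The two families of vertices of the `1h` ice lattice. -/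
def V (a h : ℝ) (i : Fin 2) : Set E :=
  {v | ∃ k l n : ℤ, v = vec (a * ((i : ℕ) + (3 / 2) * k))
      (a * ((Real.sqrt 3 / 2) * k + Real.sqrt 3 * l)) (h * n)}

/-- Horizontal jump from a vertex of type `i` in direction `j`. -/
def w (a : ℝ) (i : Fin 2) (j : Fin 3) : E :=
  vec (a * Real.cos (2 * (j : ℕ) * π / 3 + (i : ℕ) * π))
      (a * Real.sin (2 * (j : ℕ) * π / 3 + (i : ℕ) * π)) 0

/-- `S` is a random walk on ice with parameters `a, h, p, α, q` and natural filtration `F`. -/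
structure IsRWI {Ω : Type} [MeasurableSpace Ω] (P : Measure Ω)
    (a h p α : ℝ) (q : Fin 2 → Fin 3 → ℝ)
    (S : ℕ → Ω → E) (F : ℕ → MeasurableSpace Ω) : Prop where
  prob : IsProbabilityMeasure P
  ha : 0 < a
  hh : 0 < h
  hp0 : 0 ≤ p
  hp1 : p ≤ 1
  hα0 : 0 < α
  hα1 : α < 1
  hq : ∀ i j, 0 ≤ q i j
  hqsum : ∀ i, q i 0 + q i 1 + q i 2 = 1 - p
  hS0 : ∀ ω, S 0 ω = 0
  hSmeas : ∀ n, Measurable (S n)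
  hF : ∀ n, F n =
    MeasurableSpace.comap (fun ω (k : Fin n) => S ((k : ℕ) + 1) ω - S (k : ℕ) ω)
      MeasurableSpace.pi
  hTrans : ∀ (n : ℕ) (f : E → ℝ), Measurable f → (∃ C, ∀ x, |f x| ≤ C) →
    P[fun ω => f (S (n + 1) ω)|F n] =ᵐ[P]
      fun ω => ∑ i : Fin 2, (V a h i).indicator (fun _ => (1 : ℝ)) (S n ω) *
        (α * p * f (S n ω + vec 0 0 h) + (1 - α) * p * f (S n ω + vec 0 0 (-h)) +
          ∑ j : Fin 3, q i j * f (S n ω + w a i j))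

def uu (q : Fin 2 → Fin 3 → ℝ) (i : Fin 2) : ℝ := q i 1 + q i 2

def vv (q : Fin 2 → Fin 3 → ℝ) (i : Fin 2) : ℝ := q i 1 - q i 2

/-- The drift vector `μ` of the RWI. -/
def muI (a h p α : ℝ) (q : Fin 2 → Fin 3 → ℝ) : E :=
  vec (3 * a / 4 * (-(uu q 0) + uu q 1)) (a * Real.sqrt 3 / 4 * (vv q 0 - vv q 1))
    (h * p * (2 * α - 1))

/-- The vector `θ` of the RWI. -/
def thetaI (a p : ℝ) (q : Fin 2 → Fin 3 → ℝ) : E :=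
  vec (a * ((1 - p) - 3 / 4 * (uu q 0 + uu q 1))) (a * Real.sqrt 3 / 4 * (vv q 0 + vv q 1)) 0

/-- The sign process `ε_n = 1_{S_n ∈ V_0} - 1_{S_n ∈ V_1}`. -/
def epsI {Ω : Type} (a h : ℝ) (S : ℕ → Ω → E) (n : ℕ) (ω : Ω) : ℝ :=
  (V a h 0).indicator (fun _ => (1 : ℝ)) (S n ω) - (V a h 1).indicator (fun _ => (1 : ℝ)) (S n ω)

end RWI

/-!
Summing the one-step law over its ten possible jumps gives the conditional mean displacement
`∑ i, 1_{S_n ∈ V_i} • drift i`, and `drift i = μ + (-1) ^ i • θ` by the geometry of the lattice.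
Testing the one-step law against `1` shows that `∑ i, 1_{S_n ∈ V_i} = 1` almost surely, which turns
the mean displacement into `μ + ε_n • θ`.

The one-step law is only given for bounded test functions, while linear functionals are unbounded.
Since the jumps are bounded, `S_n` is almost surely bounded by induction on `n`, so that a linear
functional may be truncated outside a ball without changing anything.
-/

lemma exists_ae_forall_mem_closedBall_of_memLp_top {Ω E ι : Type*} [MeasurableSpace Ω] [Finite ι]
    [NormedAddCommGroup E] {P : Measure Ω} {y : ι → Ω → E} (hy : ∀ i, MemLp (y i) ⊤ P) :
    ∃ R, ∀ᵐ ω ∂P, ∀ i, y i ω ∈ Metric.closedBall 0 R := by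
  cases nonempty_fintype ι
  refine ⟨∑ i, lpNorm (y i) ⊤ P, ae_all_iff.2 fun i => ?_⟩
  filter_upwards [ae_le_lpNorm_exponent_top (hy i)] with ω hω
  rw [mem_closedBall_zero_iff]
  exact hω.trans (Finset.single_le_sum (fun _ _ => lpNorm_nonneg) (Finset.mem_univ i))

section FiniteCondLaw

variable {Ω E ι : Type*} {m mΩ : MeasurableSpace Ω} [MeasurableSpace E] [Fintype ι]

/-- The conditional law of `Y` given `m` is the finitely supported measure `∑ i, c i ω • δ (y i ω)`,
encoded by its action on bounded measurable test functions. -/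
def HasFiniteCondLaw (P : Measure Ω) (m : MeasurableSpace Ω) (Y : Ω → E) (c : ι → Ω → ℝ)
    (y : ι → Ω → E) : Prop :=
  ∀ f : E → ℝ, Measurable f → (∃ C, ∀ x, |f x| ≤ C) →
    P[fun ω => f (Y ω)|m] =ᵐ[P] fun ω => ∑ i, c i ω * f (y i ω)

namespace HasFiniteCondLaw

variable {P : Measure Ω} [IsFiniteMeasure P] {Y : Ω → E} {c : ι → Ω → ℝ} {y : ι → Ω → E}

lemma ae_sum_weights_eq_one (hY : HasFiniteCondLaw P m Y c y) (hm : m ≤ mΩ) :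
    ∀ᵐ ω ∂P, ∑ i, c i ω = 1 := by
  have hconst := hY (fun _ => 1) measurable_const ⟨1, by simp⟩
  rw [condExp_const hm] at hconst
  filter_upwards [hconst] with ω hω
  simpa using hω.symm

lemma ae_mem (hY : HasFiniteCondLaw P m Y c y) (hm : m ≤ mΩ) (hYm : Measurable Y) {B : Set E}
    (hB : MeasurableSet B) (hyB : ∀ᵐ ω ∂P, ∀ i, y i ω ∈ B) : ∀ᵐ ω ∂P, Y ω ∈ B := by
  have hcond : P[fun ω => Bᶜ.indicator 1 (Y ω)|m] =ᵐ[P] fun _ => (0 : ℝ) := by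
    have hbdd : ∀ x, |Bᶜ.indicator (1 : E → ℝ) x| ≤ 1 := fun x => by
      by_cases hx : x ∈ B <;> simp [hx]
    filter_upwards [hY _ (measurable_one.indicator hB.compl) ⟨1, hbdd⟩, hyB] with ω hω hyω
    simp [hω, hyω]
  have hprob : P.real (Y ⁻¹' Bᶜ) = 0 := by
    calc P.real (Y ⁻¹' Bᶜ) = ∫ ω, Bᶜ.indicator 1 (Y ω) ∂P :=
          (integral_indicator_one (hYm hB.compl)).symm
      _ = ∫ ω, (P[fun ω => Bᶜ.indicator 1 (Y ω)|m]) ω ∂P := (integral_condExp hm).symm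
      _ = 0 := by rw [integral_congr_ae hcond, integral_zero]
  exact (measureReal_eq_zero_iff).1 hprob

lemma condExp_comp_of_ae_mem (hY : HasFiniteCondLaw P m Y c y) (hm : m ≤ mΩ) (hYm : Measurable Y)
    {B : Set E} (hB : MeasurableSet B) (hyB : ∀ᵐ ω ∂P, ∀ i, y i ω ∈ B) {f : E → ℝ}
    (hf : Measurable f) (hfB : ∃ C, ∀ x ∈ B, |f x| ≤ C) :
    P[fun ω => f (Y ω)|m] =ᵐ[P] fun ω => ∑ i, c i ω * f (y i ω) := by
  obtain ⟨C, hC⟩ := hfB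
  have hbdd : ∀ x, |B.indicator f x| ≤ max C 0 := fun x => by
    by_cases hx : x ∈ B <;> simp [hx, hC]
  have htrunc : (fun ω => f (Y ω)) =ᵐ[P] fun ω => B.indicator f (Y ω) := by
    filter_upwards [hY.ae_mem hm hYm hB hyB] with ω hω using (indicator_of_mem hω f).symm
  refine (condExp_congr_ae htrunc).trans ?_
  filter_upwards [hY _ (hf.indicator hB) ⟨_, hbdd⟩, hyB] with ω hω hyω
  simp [hω, hyω]

variable [NormedAddCommGroup E] [SecondCountableTopology E] [BorelSpace E]

lemma memLp_top (hY : HasFiniteCondLaw P m Y c y) (hm : m ≤ mΩ) (hYm : Measurable Y)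
    (hy : ∀ i, MemLp (y i) ⊤ P) : MemLp Y ⊤ P := by
  obtain ⟨R, hR⟩ := exists_ae_forall_mem_closedBall_of_memLp_top hy
  refine memLp_top_of_bound hYm.aestronglyMeasurable R ?_
  simpa only [mem_closedBall_zero_iff] using
    hY.ae_mem hm hYm Metric.isClosed_closedBall.measurableSet hR

variable [NormedSpace ℝ E] [CompleteSpace E] {X : Ω → E}

theorem condExp_ae_eq (hY : HasFiniteCondLaw P m Y c y) (hm : m ≤ mΩ) (hYm : Measurable Y)
    (hy : ∀ i, MemLp (y i) ⊤ P) : P[Y|m] =ᵐ[P] fun ω => ∑ i, c i ω • y i ω := by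
  obtain ⟨R, hR⟩ := exists_ae_forall_mem_closedBall_of_memLp_top hy
  have hdual : ∀ L : StrongDual ℝ E,
      (fun ω => L ((P[Y|m]) ω - ∑ i, c i ω • y i ω)) =ᵐ[P] 0 := fun L => by
    have hLbdd : ∀ x ∈ Metric.closedBall (0 : E) R, |L x| ≤ ‖L‖ * R := fun x hx =>
      L.le_opNorm_of_le (mem_closedBall_zero_iff.1 hx)
    filter_upwards [L.comp_condExp_comm (m := m) ((hY.memLp_top hm hYm hy).integrable le_top),
      hY.condExp_comp_of_ae_mem hm hYm Metric.isClosed_closedBall.measurableSet hR L.measurable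
        ⟨_, hLbdd⟩] with ω hcomm hlaw
    have hL : L ((P[Y|m]) ω) = ∑ i, c i ω * L (y i ω) := hcomm.trans hlaw
    simp [hL]
  filter_upwards [ae_eq_zero_of_forall_dual ℝ hdual] with ω hω using sub_eq_zero.1 hω

theorem condExp_sub_ae_eq (hY : HasFiniteCondLaw P m Y c y) (hm : m ≤ mΩ) (hYm : Measurable Y)
    (hy : ∀ i, MemLp (y i) ⊤ P) (hXm : Measurable[m] X) (hX : Integrable X P) :
    P[fun ω => Y ω - X ω|m] =ᵐ[P] fun ω => ∑ i, c i ω • (y i ω - X ω) := by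
  filter_upwards [condExp_sub ((hY.memLp_top hm hYm hy).integrable le_top) hX m,
    hY.condExp_ae_eq hm hYm hy, hY.ae_sum_weights_eq_one hm] with ω hsub hmean hone
  calc (P[fun ω => Y ω - X ω|m]) ω = (P[Y|m]) ω - (P[X|m]) ω := hsub
    _ = ∑ i, c i ω • y i ω - X ω := by
        rw [hmean, condExp_of_stronglyMeasurable hm hXm.stronglyMeasurable hX]
    _ = ∑ i, c i ω • (y i ω - X ω) := by
        simp only [smul_sub, Finset.sum_sub_distrib, ← Finset.sum_smul, hone, one_smul]

end HasFiniteCondLaw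

end FiniteCondLaw

lemma measurable_comap_increments {Ω G : Type*} [AddCommGroup G] [MeasurableSpace G]
    [MeasurableAdd₂ G] {S : ℕ → Ω → G} (hS0 : ∀ ω, S 0 ω = 0) (n : ℕ) :
    Measurable[MeasurableSpace.comap (fun ω (k : Fin n) => S (k + 1) ω - S k ω)
      MeasurableSpace.pi] (S n) := by
  have htelescope : S n = fun ω => ∑ k : Fin n, (S (k + 1) ω - S k ω) := by
    ext1 ω
    rw [Fin.sum_univ_eq_sum_range (fun k => S (k + 1) ω - S k ω), Finset.sum_range_sub (S · ω),
      hS0, sub_zero]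
  have hsum : Measurable fun x : Fin n → G => ∑ k, x k := by fun_prop
  rw [htelescope]
  exact hsum.comp (comap_measurable _)

namespace RWI

lemma vec_add_vec (x y z x' y' z' : ℝ) :
    vec x y z + vec x' y' z' = vec (x + x') (y + y') (z + z') := by
  ext c
  fin_cases c <;> simp [vec]

lemma smul_vec (r x y z : ℝ) : r • vec x y z = vec (r * x) (r * y) (r * z) := by
  ext c
  fin_cases c <;> simp [vec]

lemma neg_vec (x y z : ℝ) : -vec x y z = vec (-x) (-y) (-z) := by
  ext c
  fin_cases c <;> simp [vec]

lemma w_one (a : ℝ) (j : Fin 3) : w a 1 j = -w a 0 j := by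
  simp [w, neg_vec, Real.cos_add_pi, Real.sin_add_pi]

lemma w_zero_zero (a : ℝ) : w a 0 0 = vec a 0 0 := by
  simp [w]

lemma w_zero_one (a : ℝ) : w a 0 1 = vec (-(a / 2)) (a * √3 / 2) 0 := by
  have hangle : 2 * ((1 : Fin 3) : ℕ) * π / 3 + ((0 : Fin 2) : ℕ) * π = π - π / 3 := by
    norm_num
    ring
  rw [w, hangle, Real.cos_pi_sub, Real.sin_pi_sub, Real.cos_pi_div_three, Real.sin_pi_div_three]
  ring_nf

lemma w_zero_two (a : ℝ) : w a 0 2 = vec (-(a / 2)) (-(a * √3 / 2)) 0 := by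
  have hangle : 2 * ((2 : Fin 3) : ℕ) * π / 3 + ((0 : Fin 2) : ℕ) * π = π / 3 + π := by
    norm_num
    ring
  rw [w, hangle, Real.cos_add_pi, Real.sin_add_pi, Real.cos_pi_div_three, Real.sin_pi_div_three]
  ring_nf

/-- The displacements available from a vertex of type `i`: `.inl true` and `.inl false` are the
vertical jumps up and down, `.inr j` is the horizontal jump in direction `j`. -/
def jump (a h : ℝ) (i : Fin 2) : Bool ⊕ Fin 3 → E
  | .inl true => vec 0 0 h
  | .inl false => vec 0 0 (-h)
  | .inr j => w a i j

/-- The probability of the displacement `jump a h i b` from a vertex of type `i`. -/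
def jumpProb (p α : ℝ) (q : Fin 2 → Fin 3 → ℝ) (i : Fin 2) : Bool ⊕ Fin 3 → ℝ
  | .inl true => α * p
  | .inl false => (1 - α) * p
  | .inr j => q i j

/-- The mean displacement from a vertex of type `i`. -/
def drift (a h p α : ℝ) (q : Fin 2 → Fin 3 → ℝ) (i : Fin 2) : E :=
  ∑ b, jumpProb p α q i b • jump a h i b

lemma sum_jumpProb {p : ℝ} {q : Fin 2 → Fin 3 → ℝ} {i : Fin 2}
    (hq : q i 0 + q i 1 + q i 2 = 1 - p) (α : ℝ) : ∑ b, jumpProb p α q i b = 1 := by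
  simp only [Fintype.sum_sum_type, Fintype.sum_bool, Fin.sum_univ_three, jumpProb, hq]
  ring

lemma drift_eq {p : ℝ} {q : Fin 2 → Fin 3 → ℝ} {i : Fin 2}
    (hq : q i 0 + q i 1 + q i 2 = 1 - p) (a h α : ℝ) :
    drift a h p α q i = muI a h p α q + (-1 : ℝ) ^ (i : ℕ) • thetaI a p q := by
  rw [add_assoc, ← eq_sub_iff_add_eq] at hq
  fin_cases i <;>
  · simp only [Fin.mk_one, Fin.zero_eta] at hq
    simp only [drift, Fintype.sum_sum_type, Fintype.sum_bool, Fin.sum_univ_three, jumpProb, jump,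
      muI, thetaI, uu, vv, w_one, w_zero_zero, w_zero_one, w_zero_two, neg_vec, smul_vec,
      vec_add_vec, Fin.mk_one, Fin.zero_eta, hq]
    congr 1 <;> ring

namespace IsRWI

variable {Ω : Type} [mΩ : MeasurableSpace Ω] {P : Measure Ω} {a h p α : ℝ}
  {q : Fin 2 → Fin 3 → ℝ} {S : ℕ → Ω → E} {F : ℕ → MeasurableSpace Ω}

lemma filtration_le (hRW : IsRWI P a h p α q S F) (n : ℕ) : F n ≤ mΩ := by
  rw [hRW.hF n]
  exact (measurable_pi_lambda _ fun k => (hRW.hSmeas _).sub (hRW.hSmeas _)).comap_le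

lemma measurable_position (hRW : IsRWI P a h p α q S F) (n : ℕ) : Measurable[F n] (S n) := by
  rw [hRW.hF n]
  exact measurable_comap_increments hRW.hS0 n

lemma hasFiniteCondLaw (hRW : IsRWI P a h p α q S F) (n : ℕ) :
    HasFiniteCondLaw P (F n) (S (n + 1))
      (fun (k : Fin 2 × (Bool ⊕ Fin 3)) ω =>
        (V a h k.1).indicator (fun _ => 1) (S n ω) * jumpProb p α q k.1 k.2)
      (fun k ω => S n ω + jump a h k.1 k.2) := fun f hf hbdd => by
  filter_upwards [hRW.hTrans n f hf hbdd] with ω hω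
  simp only [hω, Fintype.sum_prod_type, Fintype.sum_sum_type, Fintype.sum_bool, jumpProb, jump,
    mul_add, Finset.mul_sum, mul_assoc]

lemma ae_sum_indicator_eq_one (hRW : IsRWI P a h p α q S F) (n : ℕ) :
    ∀ᵐ ω ∂P, ∑ i, (V a h i).indicator (fun _ => (1 : ℝ)) (S n ω) = 1 := by
  have := hRW.prob
  filter_upwards [(hRW.hasFiniteCondLaw n).ae_sum_weights_eq_one (hRW.filtration_le n)] with ω hω
  simpa only [Fintype.sum_prod_type, ← Finset.mul_sum, sum_jumpProb (hRW.hqsum _), mul_one] using hω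

lemma memLp_top_position (hRW : IsRWI P a h p α q S F) (n : ℕ) : MemLp (S n) ⊤ P := by
  have := hRW.prob
  induction n with
  | zero => exact memLp_top_of_bound (hRW.hSmeas 0).aestronglyMeasurable 0 (by simp [hRW.hS0])
  | succ n ih =>
    exact (hRW.hasFiniteCondLaw n).memLp_top (hRW.filtration_le n) (hRW.hSmeas _)
      fun _ => ih.add (memLp_const _)

theorem condExp_increment (hRW : IsRWI P a h p α q S F) (n : ℕ) :
    P[fun ω => S (n + 1) ω - S n ω|F n] =ᵐ[P] fun ω =>
      ∑ i, (V a h i).indicator (fun _ => (1 : ℝ)) (S n ω) • drift a h p α q i := by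
  have := hRW.prob
  have hpos := hRW.memLp_top_position n
  filter_upwards [(hRW.hasFiniteCondLaw n).condExp_sub_ae_eq (hRW.filtration_le n) (hRW.hSmeas _)
    (fun _ => hpos.add (memLp_const _)) (hRW.measurable_position n) (hpos.integrable le_top)]
    with ω hω
  simp only [hω, drift, Fintype.sum_prod_type, add_sub_cancel_left, mul_smul, Finset.smul_sum]

end IsRWI

end RWI

theorem rwi_condexp_increment {Ω : Type} [MeasurableSpace Ω] (P : Measure Ω)
    (a h p α : ℝ) (q : Fin 2 → Fin 3 → ℝ)
    (S : ℕ → Ω → RWI.E) (F : ℕ → MeasurableSpace Ω)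
    (hRW : RWI.IsRWI P a h p α q S F) :
    ∀ n : ℕ, P[fun ω => S (n + 1) ω - S n ω|F n] =ᵐ[P]
      fun ω => RWI.muI a h p α q + RWI.epsI a h S n ω • RWI.thetaI a p q := by
  intro n
  filter_upwards [hRW.condExp_increment n, hRW.ae_sum_indicator_eq_one n] with ω hω hone
  rw [Fin.sum_univ_two, ← eq_sub_iff_add_eq'] at hone
  rw [hω, Fin.sum_univ_two, RWI.drift_eq (hRW.hqsum 0), RWI.drift_eq (hRW.hqsum 1), RWI.epsI,
    Fin.val_zero, Fin.val_one, hone]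
  module
end
end

section
/- (Strong law of large numbers for the RWG.) Suppose p > 0. Then almost surely S_n/n converges to μ + (p/(2−p))·m as n → ∞. -/
open MeasureTheory ProbabilityTheory Real Filter Set
open scoped BigOperators NNReal

noncomputable section

namespace RWG

abbrev E : Type := EuclideanSpace ℝ (Fin 3)

def vec (x y z : ℝ) : E := (EuclideanSpace.equiv (Fin 3) ℝ).symm ![x, y, z]

/-- The four families of vertices of the `2h` graphite lattice. -/
def V (a h : ℝ) (i j : Fin 2) : Set E :=
  {v | ∃ k l n : ℤ, v =
    vec (a * ((-1 : ℝ) ^ ((i : ℕ) + 1) * (if j = 1 then (1 : ℝ) else 0) + (3 / 2) * k))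
        (a * ((Real.sqrt 3 / 2) * k + Real.sqrt 3 * l))
        (h * (2 * n + (if i ≠ j then (1 : ℝ) else 0)))}

/-- Horizontal jump from a vertex of horizontal type `i` in direction `k`. -/
def w (a : ℝ) (i : Fin 2) (k : Fin 3) : E :=
  vec (a * Real.cos (2 * (k : ℕ) * π / 3 + (i : ℕ) * π))
      (a * Real.sin (2 * (k : ℕ) * π / 3 + (i : ℕ) * π)) 0

/-- `S` is a random walk on graphite with parameters `a, h, p, α, q` and natural filtration `F`. -/
structure IsRWG {Ω : Type} [MeasurableSpace Ω] (P : Measure Ω)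
    (a h p α : ℝ) (q : Fin 2 → Fin 2 → Fin 3 → ℝ)
    (S : ℕ → Ω → E) (F : ℕ → MeasurableSpace Ω) : Prop where
  prob : IsProbabilityMeasure P
  ha : 0 < a
  hh : 0 < h
  hp0 : 0 ≤ p
  hp1 : p ≤ 1
  hα0 : 0 < α
  hα1 : α < 1
  hq : ∀ i j k, 0 ≤ q i j k
  hqsum0 : ∀ i, q i 0 0 + q i 0 1 + q i 0 2 = 1 - p
  hqsum1 : ∀ i, q i 1 0 + q i 1 1 + q i 1 2 = 1
  hS0 : ∀ ω, S 0 ω = 0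
  hSmeas : ∀ n, Measurable (S n)
  hF : ∀ n, F n =
    MeasurableSpace.comap (fun ω (k : Fin n) => S ((k : ℕ) + 1) ω - S (k : ℕ) ω)
      MeasurableSpace.pi
  hTrans : ∀ (n : ℕ) (f : E → ℝ), Measurable f → (∃ C, ∀ x, |f x| ≤ C) →
    P[fun ω => f (S (n + 1) ω)|F n] =ᵐ[P]
      fun ω => ∑ i : Fin 2,
        ((V a h i 0).indicator (fun _ => (1 : ℝ)) (S n ω) *
          (α * p * f (S n ω + vec 0 0 h) + (1 - α) * p * f (S n ω + vec 0 0 (-h)) +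
            ∑ k : Fin 3, q i 0 k * f (S n ω + w a i k)) +
        (V a h i 1).indicator (fun _ => (1 : ℝ)) (S n ω) *
          ∑ k : Fin 3, q i 1 k * f (S n ω + w a i k))

def uu (q : Fin 2 → Fin 2 → Fin 3 → ℝ) (i j : Fin 2) : ℝ := q i j 1 + q i j 2

def vv (q : Fin 2 → Fin 2 → Fin 3 → ℝ) (i j : Fin 2) : ℝ := q i j 1 - q i j 2

def ss (q : Fin 2 → Fin 2 → Fin 3 → ℝ) (i j : Fin 2) : ℝ := uu q i j * (1 - uu q i j)

def tt (q : Fin 2 → Fin 2 → Fin 3 → ℝ) (i j : Fin 2) : ℝ := vv q i j * (uu q i j - 1)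

/-- The vector `μ` of the RWG. -/
def muG (a h p α : ℝ) (q : Fin 2 → Fin 2 → Fin 3 → ℝ) : E :=
  vec (3 * a / 8 * (-(uu q 0 0 + uu q 0 1) + (uu q 1 0 + uu q 1 1)))
      (a * Real.sqrt 3 / 8 * ((vv q 0 0 + vv q 0 1) - (vv q 1 0 + vv q 1 1)))
      (h * p / 2 * (2 * α - 1))

/-- The vector `m` of the RWG. -/
def mG (a h p α : ℝ) (q : Fin 2 → Fin 2 → Fin 3 → ℝ) : E :=
  vec (3 * a / 8 * (-(uu q 0 0 - uu q 0 1) + (uu q 1 0 - uu q 1 1)))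
      (a * Real.sqrt 3 / 8 * ((vv q 0 0 - vv q 0 1) - (vv q 1 0 - vv q 1 1)))
      (h * p / 2 * (2 * α - 1))

/-- The vector `θ` of the RWG. -/
def thetaG (a p : ℝ) (q : Fin 2 → Fin 2 → Fin 3 → ℝ) : E :=
  vec (a * ((1 - p / 2) - 3 / 8 * ((uu q 0 0 + uu q 0 1) + (uu q 1 0 + uu q 1 1))))
      (a * Real.sqrt 3 / 8 * ((vv q 0 0 + vv q 0 1) + (vv q 1 0 + vv q 1 1))) 0

/-- The vector `ρ` of the RWG. -/
def rhoG (a p : ℝ) (q : Fin 2 → Fin 2 → Fin 3 → ℝ) : E :=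
  vec (a * (-(p / 2) - 3 / 8 * ((uu q 0 0 - uu q 0 1) + (uu q 1 0 - uu q 1 1))))
      (a * Real.sqrt 3 / 8 * ((vv q 0 0 - vv q 0 1) + (vv q 1 0 - vv q 1 1))) 0

/-- The vector `ζ = (0, 0, hp(2α−1))`. -/
def zetaG (h p α : ℝ) : E := vec 0 0 (h * p * (2 * α - 1))

/-- The indicator process `i_n`. -/
def iP {Ω : Type} (a h : ℝ) (S : ℕ → Ω → E) (n : ℕ) (ω : Ω) : ℝ :=
  (V a h 0 0 ∪ V a h 0 1).indicator (fun _ => (1 : ℝ)) (S n ω) -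
    (V a h 1 0 ∪ V a h 1 1).indicator (fun _ => (1 : ℝ)) (S n ω)

/-- The indicator process `j_n`. -/
def jP {Ω : Type} (a h : ℝ) (S : ℕ → Ω → E) (n : ℕ) (ω : Ω) : ℝ :=
  (V a h 0 0 ∪ V a h 1 0).indicator (fun _ => (1 : ℝ)) (S n ω) -
    (V a h 0 1 ∪ V a h 1 1).indicator (fun _ => (1 : ℝ)) (S n ω)

/-- The indicator process `k_n`. -/
def kP {Ω : Type} (a h : ℝ) (S : ℕ → Ω → E) (n : ℕ) (ω : Ω) : ℝ :=
  (V a h 0 0 ∪ V a h 1 1).indicator (fun _ => (1 : ℝ)) (S n ω) -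
    (V a h 0 1 ∪ V a h 1 0).indicator (fun _ => (1 : ℝ)) (S n ω)

/-- The matrix `σ²` of the RWG. -/
def sigmaG (a h p α : ℝ) (q : Fin 2 → Fin 2 → Fin 3 → ℝ) : Matrix (Fin 3) (Fin 3) ℝ :=
  !![a ^ 2 / 4 * (2 * p * (1 - p) + 9 / 4 * (ss q 0 0 + ss q 1 0 + ss q 0 1 + ss q 1 1)
        - 3 * p * (uu q 0 0 + uu q 1 0)),
     a ^ 2 * Real.sqrt 3 / 16 * (3 * (tt q 0 0 + tt q 1 0 + tt q 0 1 + tt q 1 1)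
        + 2 * p * (vv q 0 0 + vv q 1 0)),
     a * h / 8 * (-4 * p * (1 - p) * (2 * α - 1)
        + 3 * p * (2 * α - 1) * (uu q 0 0 + uu q 1 0));
     a ^ 2 * Real.sqrt 3 / 16 * (3 * (tt q 0 0 + tt q 1 0 + tt q 0 1 + tt q 1 1)
        + 2 * p * (vv q 0 0 + vv q 1 0)),
     3 * a ^ 2 / 16 * ((uu q 0 0 + uu q 1 0 + uu q 0 1 + uu q 1 1)
        - ((vv q 0 0) ^ 2 + (vv q 1 0) ^ 2 + (vv q 0 1) ^ 2 + (vv q 1 1) ^ 2)),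
     -(a * h * Real.sqrt 3 / 8) * (p * (2 * α - 1) * (vv q 0 0 + vv q 1 0));
     a * h / 8 * (-4 * p * (1 - p) * (2 * α - 1)
        + 3 * p * (2 * α - 1) * (uu q 0 0 + uu q 1 0)),
     -(a * h * Real.sqrt 3 / 8) * (p * (2 * α - 1) * (vv q 0 0 + vv q 1 0)),
     h ^ 2 * p / 2 * (1 - p * (2 * α - 1) ^ 2)]

/-- The matrix `γ` of the RWG. -/
def gammaG (a h p α : ℝ) (q : Fin 2 → Fin 2 → Fin 3 → ℝ) : Matrix (Fin 3) (Fin 3) ℝ :=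
  !![a ^ 2 / 4 * (2 * p * (1 - p) + 9 / 4 * (ss q 0 0 + ss q 1 0 - ss q 0 1 - ss q 1 1)
        - 3 * p * (uu q 0 0 + uu q 1 0)),
     a ^ 2 * Real.sqrt 3 / 16 * (3 * (tt q 0 0 + tt q 1 0 - tt q 0 1 - tt q 1 1)
        + 2 * p * (vv q 0 0 + vv q 1 0)),
     a * h / 8 * (-4 * p * (1 - p) * (2 * α - 1)
        + 3 * p * (2 * α - 1) * (uu q 0 0 + uu q 1 0));
     a ^ 2 * Real.sqrt 3 / 16 * (3 * (tt q 0 0 + tt q 1 0 - tt q 0 1 - tt q 1 1)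
        + 2 * p * (vv q 0 0 + vv q 1 0)),
     3 * a ^ 2 / 16 * ((uu q 0 0 + uu q 1 0 - uu q 0 1 - uu q 1 1)
        - ((vv q 0 0) ^ 2 + (vv q 1 0) ^ 2 - (vv q 0 1) ^ 2 - (vv q 1 1) ^ 2)),
     -(a * h * Real.sqrt 3 / 8) * (p * (2 * α - 1) * (vv q 0 0 + vv q 1 0));
     a * h / 8 * (-4 * p * (1 - p) * (2 * α - 1)
        + 3 * p * (2 * α - 1) * (uu q 0 0 + uu q 1 0)),
     -(a * h * Real.sqrt 3 / 8) * (p * (2 * α - 1) * (vv q 0 0 + vv q 1 0)),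
     h ^ 2 * p / 2 * (1 - p * (2 * α - 1) ^ 2)]

/-- The matrix `δ` of the RWG. -/
def deltaG (a h p α : ℝ) (q : Fin 2 → Fin 2 → Fin 3 → ℝ) : Matrix (Fin 3) (Fin 3) ℝ :=
  !![a ^ 2 / 4 * (9 / 4 * (ss q 0 0 - ss q 1 0 - ss q 0 1 + ss q 1 1)
        - 3 * p * (uu q 0 0 - uu q 1 0)),
     a ^ 2 * Real.sqrt 3 / 16 * (3 * (tt q 0 0 - tt q 1 0 - tt q 0 1 + tt q 1 1)
        + 2 * p * (vv q 0 0 - vv q 1 0)),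
     a * h / 8 * (3 * p * (2 * α - 1) * (uu q 0 0 - uu q 1 0));
     a ^ 2 * Real.sqrt 3 / 16 * (3 * (tt q 0 0 - tt q 1 0 - tt q 0 1 + tt q 1 1)
        + 2 * p * (vv q 0 0 - vv q 1 0)),
     3 * a ^ 2 / 16 * ((uu q 0 0 - uu q 1 0 - uu q 0 1 + uu q 1 1)
        - ((vv q 0 0) ^ 2 - (vv q 1 0) ^ 2 - (vv q 0 1) ^ 2 + (vv q 1 1) ^ 2)),
     -(a * h * Real.sqrt 3 / 8) * (p * (2 * α - 1) * (vv q 0 0 - vv q 1 0));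
     a * h / 8 * (3 * p * (2 * α - 1) * (uu q 0 0 - uu q 1 0)),
     -(a * h * Real.sqrt 3 / 8) * (p * (2 * α - 1) * (vv q 0 0 - vv q 1 0)),
     0]

/-- A probability measure on `ℝ³` is the centered Gaussian law with covariance matrix `Γ`
if every linear functional pushes it to the corresponding one-dimensional Gaussian law. -/
def IsCenteredGaussian (G : Measure E) (Γ : Matrix (Fin 3) (Fin 3) ℝ) : Prop :=
  IsProbabilityMeasure G ∧
    ∀ u : Fin 3 → ℝ, G.map (fun x => ∑ r, u r * x r) =
      gaussianReal 0 (Real.toNNReal (∑ r, ∑ c, u r * Γ r c * u c))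

/-- View a point of `ℝ³` as a plain function on indices. -/
def toFun (x : E) : Fin 3 → ℝ := x

end RWG

/-!
The type `(i, j)` of the current vertex is itself a Markov chain on four states, and the mean jump
depends on the type only. Solving the Poisson equation of this chain for the mean jump minus its
stationary average `v` gives a function `χ` of the type such that `S n + χ (type of S n) - n • v` is
a martingale with bounded increments; `p > 0` is what makes the equation solvable, since for `p = 0`
the chain of types splits into two classes. Such a martingale is almost surely `o(n)`: dividing its
`k`-th increment by `k + 1` produces an `L²`-bounded, hence convergent, martingale, and Kronecker's
lemma applies. As `χ` is bounded, `S n / n` tends to `v`.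
-/

section MartingaleStrongLaw

lemma sum_eq_smul_sum_inv_smul_sub {W : Type*} [AddCommGroup W] [Module ℝ W]
    (x : ℕ → W) (n : ℕ) :
    ∑ k ∈ Finset.range n, x k =
      (n : ℝ) • ∑ k ∈ Finset.range n, ((k : ℝ) + 1)⁻¹ • x k -
        ∑ m ∈ Finset.range n, ∑ k ∈ Finset.range m, ((k : ℝ) + 1)⁻¹ • x k := by
  induction n with
  | zero => simp
  | succ n ih =>
    have hn : (n : ℝ) + 1 ≠ 0 := n.cast_add_one_ne_zero
    simp only [Finset.sum_range_succ, ih, Nat.cast_add_one, smul_add, add_smul, one_smul]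
    match_scalars <;> field_simp
    ring

-- Kronecker's lemma for the weights `k + 1`: by the summation by parts above, the averages are the
-- difference between the partial sums of the weighted series and their Cesàro means.
lemma tendsto_inv_smul_sum_of_tendsto_sum_inv_smul {W : Type*} [NormedAddCommGroup W]
    [NormedSpace ℝ W] {x : ℕ → W} {l : W}
    (hx : Tendsto (fun n : ℕ => ∑ k ∈ Finset.range n, ((k : ℝ) + 1)⁻¹ • x k) atTop (nhds l)) :
    Tendsto (fun n : ℕ => (n : ℝ)⁻¹ • ∑ k ∈ Finset.range n, x k) atTop (nhds 0) := by
  have hdiff := hx.sub hx.cesaro_smul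
  rw [sub_self] at hdiff
  refine hdiff.congr' ?_
  filter_upwards [eventually_ne_atTop 0] with n hn
  rw [sum_eq_smul_sum_inv_smul_sub x n, smul_sub, inv_smul_smul₀ (Nat.cast_ne_zero.2 hn)]

variable {Ω : Type*} {m m0 : MeasurableSpace Ω} {μ : Measure Ω}

lemma ae_restrict_eq_zero_of_condExp_eq_zero [IsFiniteMeasure μ] (hm : m ≤ m0) {f : Ω → ℝ}
    {s : Set Ω} (hf : Integrable f μ) (hf0 : 0 ≤ f) (hs : MeasurableSet[m] s)
    (h : ∀ᵐ ω ∂μ.restrict s, (μ[f | m]) ω = 0) : f =ᵐ[μ.restrict s] 0 := by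
  rw [← integral_eq_zero_iff_of_nonneg hf0 hf.restrict, ← setIntegral_condExp hm hf hs]
  exact integral_eq_zero_of_ae h

lemma integral_mul_eq_zero_of_condExp_eq_zero [IsFiniteMeasure μ] (hm : m ≤ m0) {f g : Ω → ℝ}
    (hf : StronglyMeasurable[m] f) (hfL : MemLp f 2 μ) (hgL : MemLp g 2 μ)
    (hg : μ[g | m] =ᵐ[μ] 0) : ∫ ω, f ω * g ω ∂μ = 0 := by
  have hfg : Integrable (f * g) μ := hfL.integrable_mul hgL
  have hpull := condExp_mul_of_stronglyMeasurable_left hf hfg (hgL.integrable one_le_two)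
  calc ∫ ω, f ω * g ω ∂μ = ∫ ω, (μ[f * g | m]) ω ∂μ := (integral_condExp hm).symm
    _ = 0 := integral_eq_zero_of_ae (by
        filter_upwards [hpull, hg] with ω hω hgω
        rw [hω, Pi.mul_apply, hgω, Pi.zero_apply, mul_zero])

variable {ℱ : Filtration ℕ m0} {M : ℕ → Ω → ℝ}

lemma condExp_increment_eq_zero_of_martingale (hM : Martingale M ℱ μ) (n : ℕ) :
    μ[M (n + 1) - M n | ℱ n] =ᵐ[μ] 0 := by
  filter_upwards [condExp_sub (hM.integrable (n + 1)) (hM.integrable n) (ℱ n),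
    hM.condExp_ae_eq n.le_succ, hM.condExp_ae_eq le_rfl] with ω hsub hsucc hself
  rw [hsub, Pi.sub_apply, hsucc, hself, sub_self, Pi.zero_apply]

lemma integral_add_sq_of_integral_mul_eq_zero {f g : Ω → ℝ} (hf : MemLp f 2 μ)
    (hg : MemLp g 2 μ) (hfg : ∫ ω, f ω * g ω ∂μ = 0) :
    ∫ ω, (f ω + g ω) ^ 2 ∂μ = ∫ ω, f ω ^ 2 ∂μ + ∫ ω, g ω ^ 2 ∂μ := by
  have hsq : Integrable (fun ω => f ω ^ 2 + g ω ^ 2) μ := hf.integrable_sq.add hg.integrable_sq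
  have hcross : Integrable (fun ω => 2 * (f ω * g ω)) μ := (hf.integrable_mul hg).const_mul 2
  calc ∫ ω, (f ω + g ω) ^ 2 ∂μ = ∫ ω, (f ω ^ 2 + g ω ^ 2 + 2 * (f ω * g ω)) ∂μ := by
        congr 1 with ω
        ring
    _ = ∫ ω, (f ω ^ 2 + g ω ^ 2) ∂μ + 2 * ∫ ω, f ω * g ω ∂μ := by
        rw [integral_add hsq hcross, integral_const_mul]
    _ = ∫ ω, f ω ^ 2 ∂μ + ∫ ω, g ω ^ 2 ∂μ := by
        rw [hfg, mul_zero, add_zero, integral_add hf.integrable_sq hg.integrable_sq]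

lemma integral_sq_sum_mul_increment_of_martingale [IsFiniteMeasure μ] (hM : Martingale M ℱ μ)
    (hL : ∀ n, MemLp (M n) 2 μ) (c : ℕ → ℝ) (n : ℕ) :
    ∫ ω, (∑ k ∈ Finset.range n, c k * (M (k + 1) ω - M k ω)) ^ 2 ∂μ =
      ∑ k ∈ Finset.range n, c k ^ 2 * ∫ ω, (M (k + 1) ω - M k ω) ^ 2 ∂μ := by
  induction n with
  | zero => simp
  | succ n ih =>
    set T : Ω → ℝ := fun ω => ∑ k ∈ Finset.range n, c k * (M (k + 1) ω - M k ω)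
    have hTL : MemLp T 2 μ :=
      memLp_finsetSum _ fun k _ => ((hL (k + 1)).sub (hL k)).const_mul (c k)
    have hTm : StronglyMeasurable[ℱ n] T :=
      Finset.stronglyMeasurable_fun_sum _ fun k hk =>
        (((hM.stronglyMeasurable (k + 1)).mono (ℱ.mono (Finset.mem_range.1 hk))).sub
          ((hM.stronglyMeasurable k).mono (ℱ.mono (Finset.mem_range.1 hk).le))).const_mul _
    have hξL : MemLp (M (n + 1) - M n) 2 μ := (hL (n + 1)).sub (hL n)
    have horth : ∫ ω, T ω * (c n * (M (n + 1) ω - M n ω)) ∂μ = 0 := by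
      simp only [mul_left_comm _ (c n), integral_const_mul]
      exact mul_eq_zero_of_right _ (integral_mul_eq_zero_of_condExp_eq_zero (ℱ.le n) hTm hTL hξL
        (condExp_increment_eq_zero_of_martingale hM n))
    rw [Finset.sum_range_succ, ← ih, ← integral_const_mul]
    simp only [Finset.sum_range_succ, ← mul_pow]
    exact integral_add_sq_of_integral_mul_eq_zero hTL (hξL.const_mul (c n)) horth

lemma eLpNorm_one_le_of_integral_sq_le [IsFiniteMeasure μ] {f : Ω → ℝ} {C : ℝ}
    (hf : MemLp f 2 μ) (hC : ∫ ω, f ω ^ 2 ∂μ ≤ C) :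
    eLpNorm f 1 μ ≤ (μ.real univ + C).toNNReal := by
  have habs (ω : Ω) : ‖f ω‖ ≤ 1 + f ω ^ 2 := by
    rw [Real.norm_eq_abs, ← sq_abs]
    nlinarith [sq_nonneg (|f ω| - 1)]
  rw [eLpNorm_one_eq_lintegral_enorm,
    ← ofReal_integral_norm_eq_lintegral_enorm (hf.integrable one_le_two)]
  refine ENNReal.ofReal_le_ofReal ?_
  calc ∫ ω, ‖f ω‖ ∂μ ≤ ∫ ω, (1 + f ω ^ 2) ∂μ :=
        integral_mono (hf.integrable one_le_two).norm
          ((integrable_const 1).add hf.integrable_sq) habs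
    _ = μ.real univ + ∫ ω, f ω ^ 2 ∂μ := by
        rw [integral_add (integrable_const 1) hf.integrable_sq, integral_const, smul_eq_mul,
          mul_one]
    _ ≤ μ.real univ + C := by gcongr

theorem ae_tendsto_inv_mul_of_martingale [IsFiniteMeasure μ] (hM : Martingale M ℱ μ)
    (hL : ∀ n, MemLp (M n) 2 μ)
    (hsum : Summable fun n : ℕ => ((n : ℝ) + 1)⁻¹ ^ 2 * ∫ ω, (M (n + 1) ω - M n ω) ^ 2 ∂μ) :
    ∀ᵐ ω ∂μ, Tendsto (fun n : ℕ => (n : ℝ)⁻¹ * M n ω) atTop (nhds 0) := by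
  set T : ℕ → Ω → ℝ := fun n => ∑ k ∈ Finset.range n,
    (fun _ => ((k : ℝ) + 1)⁻¹) * (M (k + 1) - M k) with hT
  have hTapply (n : ℕ) (ω : Ω) :
      T n ω = ∑ k ∈ Finset.range n, ((k : ℝ) + 1)⁻¹ * (M (k + 1) ω - M k ω) := by
    simp [hT]
  have hTsub : Submartingale T ℱ μ :=
    hM.submartingale.sum_mul_sub (R := 1) (fun _ => stronglyMeasurable_const)
      (fun n _ => inv_le_one_of_one_le₀ (by simp)) (fun n _ => by positivity)
  have hTL (n : ℕ) : MemLp (T n) 2 μ :=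
    memLp_finsetSum' _ fun k _ => ((hL (k + 1)).sub (hL k)).const_mul _
  have hTbdd (n : ℕ) : eLpNorm (T n) 1 μ ≤ (μ.real univ +
      ∑' k : ℕ, ((k : ℝ) + 1)⁻¹ ^ 2 * ∫ ω, (M (k + 1) ω - M k ω) ^ 2 ∂μ).toNNReal :=
    eLpNorm_one_le_of_integral_sq_le (hTL n) <| by
      simp only [hTapply, integral_sq_sum_mul_increment_of_martingale hM hL]
      exact hsum.sum_le_tsum _ fun k _ =>
        mul_nonneg (by positivity) (integral_nonneg fun ω => sq_nonneg _)
  filter_upwards [hTsub.exists_ae_tendsto_of_bdd hTbdd] with ω ⟨l, hl⟩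
  simp only [hTapply] at hl
  have hinit : Tendsto (fun n : ℕ => (n : ℝ)⁻¹ * M 0 ω) atTop (nhds 0) := by
    simpa using (tendsto_inv_atTop_nhds_zero_nat (𝕜 := ℝ)).mul_const (M 0 ω)
  simpa [Finset.sum_range_sub (fun k => M k ω), ← mul_add] using
    (tendsto_inv_smul_sum_of_tendsto_sum_inv_smul hl).add hinit

theorem ae_tendsto_inv_mul_of_martingale_of_bounded_increments [IsFiniteMeasure μ]
    (hM : Martingale M ℱ μ) (hL : ∀ n, MemLp (M n) 2 μ) {D : ℝ}
    (hD : ∀ n, ∀ᵐ ω ∂μ, |M (n + 1) ω - M n ω| ≤ D) :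
    ∀ᵐ ω ∂μ, Tendsto (fun n : ℕ => (n : ℝ)⁻¹ * M n ω) atTop (nhds 0) := by
  have hsq (n : ℕ) : ∫ ω, (M (n + 1) ω - M n ω) ^ 2 ∂μ ≤ μ.real univ * D ^ 2 := by
    calc ∫ ω, (M (n + 1) ω - M n ω) ^ 2 ∂μ ≤ ∫ _, D ^ 2 ∂μ := by
          refine integral_mono_ae ((hL (n + 1)).sub (hL n)).integrable_sq (integrable_const _) ?_
          filter_upwards [hD n] with ω hω
          exact sq_le_sq' (abs_le.1 hω).1 (abs_le.1 hω).2
      _ = μ.real univ * D ^ 2 := by rw [integral_const, smul_eq_mul]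
  have hinv : Summable fun n : ℕ => ((n : ℝ) + 1)⁻¹ ^ 2 := by
    simpa using (summable_nat_add_iff 1).2 (Real.summable_nat_pow_inv.2 one_lt_two)
  refine ae_tendsto_inv_mul_of_martingale hM hL <|
    (hinv.mul_right (μ.real univ * D ^ 2)).of_nonneg_of_le (fun n => ?_) fun n => ?_
  · exact mul_nonneg (by positivity) (integral_nonneg fun ω => sq_nonneg _)
  · exact mul_le_mul_of_nonneg_left (hsq n) (by positivity)

end MartingaleStrongLaw

namespace RWG

section Lattice

@[simp] lemma vec_apply_zero (x y z : ℝ) : vec x y z 0 = x := rfl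

@[simp] lemma vec_apply_one (x y z : ℝ) : vec x y z 1 = y := rfl

@[simp] lemma vec_apply_two (x y z : ℝ) : vec x y z 2 = z := rfl

lemma ext_coords {x y : E} (h0 : x 0 = y 0) (h1 : x 1 = y 1) (h2 : x 2 = y 2) : x = y := by
  ext r
  fin_cases r <;> assumption

lemma mem_V_iff {a h : ℝ} {i j : Fin 2} {x : E} : x ∈ V a h i j ↔ ∃ k l n : ℤ,
    x 0 = a * ((-1 : ℝ) ^ ((i : ℕ) + 1) * (if j = 1 then (1 : ℝ) else 0) + (3 / 2) * k) ∧
    x 1 = a * ((√3 / 2) * k + √3 * l) ∧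
    x 2 = h * (2 * n + (if i ≠ j then (1 : ℝ) else 0)) := by
  constructor
  · rintro ⟨k, l, n, rfl⟩
    exact ⟨k, l, n, rfl, rfl, rfl⟩
  · rintro ⟨k, l, n, h0, h1, h2⟩
    exact ⟨k, l, n, ext_coords h0 h1 h2⟩

-- After clearing denominators, the first coordinate determines `(-1) ^ (i + 1) * 1_{j = 1}` modulo
-- `3` and the last one determines `1_{i ≠ j}` modulo `2`; together these give back `i` and `j`.
lemma eq_and_eq_of_mem_V {a h : ℝ} (ha : a ≠ 0) (hh : h ≠ 0) {i j i' j' : Fin 2} {x : E}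
    (hx : x ∈ V a h i j) (hx' : x ∈ V a h i' j') : i = i' ∧ j = j' := by
  obtain ⟨k, l, n, h0, -, h2⟩ := mem_V_iff.1 hx
  obtain ⟨k', l', n', h0', -, h2'⟩ := mem_V_iff.1 hx'
  have e0 := mul_left_cancel₀ ha (h0.symm.trans h0')
  have e2 := mul_left_cancel₀ hh (h2.symm.trans h2')
  have z0 : 2 * (-1) ^ ((i : ℕ) + 1) * (if j = 1 then (1 : ℤ) else 0) + 3 * k =
      2 * (-1) ^ ((i' : ℕ) + 1) * (if j' = 1 then (1 : ℤ) else 0) + 3 * k' := by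
    refine Int.cast_injective (α := ℝ) ?_
    push_cast
    linarith
  have z2 : 2 * n + (if i ≠ j then (1 : ℤ) else 0) =
      2 * n' + (if i' ≠ j' then (1 : ℤ) else 0) := by
    refine Int.cast_injective (α := ℝ) ?_
    push_cast
    exact e2
  fin_cases i <;> fin_cases j <;> fin_cases i' <;> fin_cases j' <;> simp at z0 z2 ⊢ <;> omega

lemma countable_V (a h : ℝ) (i j : Fin 2) : (V a h i j).Countable := by
  refine (countable_range fun t : ℤ × ℤ × ℤ =>
    vec (a * ((-1 : ℝ) ^ ((i : ℕ) + 1) * (if j = 1 then (1 : ℝ) else 0) + (3 / 2) * t.1))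
        (a * ((√3 / 2) * t.1 + √3 * t.2.1))
        (h * (2 * t.2.2 + (if i ≠ j then (1 : ℝ) else 0)))).mono ?_
  rintro x ⟨k, l, n, rfl⟩
  exact ⟨(k, l, n), rfl⟩

lemma zero_mem_V (a h : ℝ) : (0 : E) ∈ V a h 0 0 :=
  mem_V_iff.2 ⟨0, 0, 0, by simp⟩

lemma w_eq (a : ℝ) (i : Fin 2) (k : Fin 3) :
    w a i k = vec (a * ((-1) ^ (i : ℕ) * ![1, -(1 / 2), -(1 / 2)] k))
      (a * ((-1) ^ (i : ℕ) * ![0, √3 / 2, -(√3 / 2)] k)) 0 := by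
  have c1 : Real.cos (2 * π / 3) = -(1 / 2) := by
    rw [show 2 * π / 3 = π - π / 3 by ring, Real.cos_pi_sub, Real.cos_pi_div_three]
  have s1 : Real.sin (2 * π / 3) = √3 / 2 := by
    rw [show 2 * π / 3 = π - π / 3 by ring, Real.sin_pi_sub, Real.sin_pi_div_three]
  have c2 : Real.cos (2 * 2 * π / 3) = -(1 / 2) := by
    rw [show 2 * 2 * π / 3 = π / 3 + π by ring, Real.cos_add_pi, Real.cos_pi_div_three]
  have s2 : Real.sin (2 * 2 * π / 3) = -(√3 / 2) := by
    rw [show 2 * 2 * π / 3 = π / 3 + π by ring, Real.sin_add_pi, Real.sin_pi_div_three]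
  norm_num at c1 s1 c2 s2
  unfold w
  fin_cases i <;> fin_cases k <;>
    norm_num [Real.cos_add_pi, Real.sin_add_pi, c1, s1, c2, s2]

lemma add_up_mem_V {a h : ℝ} {i : Fin 2} {x : E} (hx : x ∈ V a h i 0) :
    x + vec 0 0 h ∈ V a h (1 - i) 0 := by
  obtain ⟨k, l, n, h0, h1, h2⟩ := mem_V_iff.1 hx
  refine mem_V_iff.2 ⟨k, l, n + (i : ℕ), ?_⟩
  fin_cases i <;> simp [h0, h1, h2] <;> ring

lemma add_down_mem_V {a h : ℝ} {i : Fin 2} {x : E} (hx : x ∈ V a h i 0) :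
    x + vec 0 0 (-h) ∈ V a h (1 - i) 0 := by
  obtain ⟨k, l, n, h0, h1, h2⟩ := mem_V_iff.1 hx
  refine mem_V_iff.2 ⟨k, l, n + (i : ℕ) - 1, ?_⟩
  fin_cases i <;> simp [h0, h1, h2] <;> ring

-- The vectors `![0, 1, 1]` and `![0, 1, 0]` list the changes of the integer coordinates of `V`
-- under the three horizontal directions, up to the sign imposed by the type `i`.
lemma add_w_mem_V {a h : ℝ} {i j : Fin 2} {x : E} (hx : x ∈ V a h i j) (k : Fin 3) :
    x + w a i k ∈ V a h (1 - i) (1 - j) := by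
  obtain ⟨b, l, n, h0, h1, h2⟩ := mem_V_iff.1 hx
  rw [w_eq]
  refine mem_V_iff.2 ⟨b - (-1) ^ (i : ℕ) * ![0, 1, 1] k,
    l + (-1) ^ (i : ℕ) * ![0, 1, 0] k, n, ?_, ?_, ?_⟩
  all_goals fin_cases i <;> fin_cases j <;> fin_cases k <;> simp [h0, h1, h2] <;> ring

/-- The function on `E` that takes the value `g i j` on `V a h i j` and vanishes off the lattice. -/
def ofType {W : Type*} [AddCommMonoid W] (a h : ℝ) (g : Fin 2 → Fin 2 → W) (x : E) : W :=
  ∑ i, ∑ j, (V a h i j).indicator (fun _ => g i j) x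

lemma ofType_apply {W : Type*} [AddCommMonoid W] {a h : ℝ} (ha : a ≠ 0) (hh : h ≠ 0)
    {i j : Fin 2} {x : E} (hx : x ∈ V a h i j) (g : Fin 2 → Fin 2 → W) :
    ofType a h g x = g i j := by
  have hV (i' j' : Fin 2) : x ∈ V a h i' j' ↔ i = i' ∧ j = j' :=
    ⟨eq_and_eq_of_mem_V ha hh hx, by rintro ⟨rfl, rfl⟩; exact hx⟩
  simp [ofType, indicator, hV, ite_and]

lemma measurable_ofType {W : Type*} [AddCommMonoid W] [MeasurableSpace W] [MeasurableAdd₂ W]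
    (a h : ℝ) (g : Fin 2 → Fin 2 → W) : Measurable (ofType a h g) :=
  Finset.measurable_sum _ fun i _ => Finset.measurable_sum _ fun j _ =>
    measurable_const.indicator (countable_V a h i j).measurableSet

end Lattice

section Jumps

/-- The possible jumps from a vertex of horizontal type `i`: two vertical, three horizontal. -/
def jump (a h : ℝ) (i : Fin 2) : Fin 5 → E :=
  ![vec 0 0 h, vec 0 0 (-h), w a i 0, w a i 1, w a i 2]

/-- The probabilities of the jumps from a vertex of `V a h i j`; from `j = 1` the vertical jumps are
impossible, so they get probability `0`. -/
def jumpProb (p α : ℝ) (q : Fin 2 → Fin 2 → Fin 3 → ℝ) (i j : Fin 2) : Fin 5 → ℝ :=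
  ![if j = 0 then α * p else 0, if j = 0 then (1 - α) * p else 0, q i j 0, q i j 1, q i j 2]

/-- The second type index of the vertex reached by each jump from a vertex of `V a h i j`; the first
one is always `1 - i`. -/
def jumpTarget (j : Fin 2) : Fin 5 → Fin 2 := ![0, 0, 1 - j, 1 - j, 1 - j]

/-- `y` is reached from the lattice vertex `x` by one jump of positive probability. -/
def IsEdge (a h p α : ℝ) (q : Fin 2 → Fin 2 → Fin 3 → ℝ) (x y : E) : Prop :=
  ∃ i j k, x ∈ V a h i j ∧ jumpProb p α q i j k ≠ 0 ∧ y = x + jump a h i k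

/-- The transition operator of the random walk, in the form in which it appears in `IsRWG`. -/
def transition (a h p α : ℝ) (q : Fin 2 → Fin 2 → Fin 3 → ℝ) (f : E → ℝ) (x : E) : ℝ :=
  ∑ i : Fin 2,
    ((V a h i 0).indicator (fun _ => (1 : ℝ)) x *
      (α * p * f (x + vec 0 0 h) + (1 - α) * p * f (x + vec 0 0 (-h)) +
        ∑ k : Fin 3, q i 0 k * f (x + w a i k)) +
    (V a h i 1).indicator (fun _ => (1 : ℝ)) x *
      ∑ k : Fin 3, q i 1 k * f (x + w a i k))

variable {a h p α : ℝ} {q : Fin 2 → Fin 2 → Fin 3 → ℝ}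

lemma add_jump_mem_V {i j : Fin 2} {x : E} (hx : x ∈ V a h i j) {k : Fin 5}
    (hk : jumpProb p α q i j k ≠ 0) : x + jump a h i k ∈ V a h (1 - i) (jumpTarget j k) := by
  have hvert (r : ℝ) (hr : (if j = 0 then r else 0) ≠ 0) : x ∈ V a h i 0 :=
    (ite_ne_right_iff.1 hr).1 ▸ hx
  fin_cases k
  · exact add_up_mem_V (hvert _ hk)
  · exact add_down_mem_V (hvert _ hk)
  · exact add_w_mem_V hx 0
  · exact add_w_mem_V hx 1
  · exact add_w_mem_V hx 2

lemma finite_setOf_isEdge (a h p α : ℝ) (q : Fin 2 → Fin 2 → Fin 3 → ℝ) (x : E) :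
    {y | IsEdge a h p α q x y}.Finite := by
  refine (finite_range fun t : Fin 2 × Fin 5 => x + jump a h t.1 t.2).subset ?_
  rintro y ⟨i, j, k, -, -, rfl⟩
  exact ⟨(i, k), rfl⟩

lemma transition_eq_sum (ha : a ≠ 0) (hh : h ≠ 0) {i j : Fin 2} {x : E} (hx : x ∈ V a h i j)
    (f : E → ℝ) :
    transition a h p α q f x = ∑ k, jumpProb p α q i j k * f (x + jump a h i k) := by
  have hV (i' j' : Fin 2) : x ∈ V a h i' j' ↔ i = i' ∧ j = j' :=
    ⟨eq_and_eq_of_mem_V ha hh hx, by rintro ⟨rfl, rfl⟩; exact hx⟩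
  fin_cases i <;> fin_cases j <;>
    simp [transition, indicator, hV, Fin.sum_univ_five, Fin.sum_univ_three, jumpProb, jump] <;> ring

lemma transition_congr (ha : a ≠ 0) (hh : h ≠ 0) {i j : Fin 2} {x : E} (hx : x ∈ V a h i j)
    {f g : E → ℝ} (hfg : ∀ y, IsEdge a h p α q x y → f y = g y) :
    transition a h p α q f x = transition a h p α q g x := by
  rw [transition_eq_sum ha hh hx, transition_eq_sum ha hh hx]
  refine Finset.sum_congr rfl fun k _ => ?_
  by_cases hk : jumpProb p α q i j k = 0
  · rw [hk, zero_mul, zero_mul]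
  · rw [hfg _ ⟨i, j, k, hx, hk, rfl⟩]

end Jumps

section Corrector

/-- The mean jump from a vertex of `V a h i j`. -/
def drift (a h p α : ℝ) (q : Fin 2 → Fin 2 → Fin 3 → ℝ) (i j : Fin 2) : E :=
  ∑ k, jumpProb p α q i j k • jump a h i k

/-- The asymptotic velocity of the random walk: the mean of `drift` under the stationary law of the
chain of vertex types, see `smul_velocity`. -/
def velocity (a h p α : ℝ) (q : Fin 2 → Fin 2 → Fin 3 → ℝ) : E :=
  muG a h p α q + (p / (2 - p)) • mG a h p α q

/-- The solution of the Poisson equation of the chain of vertex types with right-hand side `b`,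
normalised to vanish at the type `(1, 0)`. -/
def poissonSolution {W : Type*} [AddCommGroup W] [Module ℝ W] (p : ℝ) (b : Fin 2 → Fin 2 → W) :
    Fin 2 → Fin 2 → W :=
  let e := p⁻¹ • (b 0 0 + (1 - p) • b 1 1)
  ![![e, b 0 1], ![0, b 1 1 + e]]

/-- The corrector of the random walk: the Poisson solution for the centred drift. -/
def corrector (a h p α : ℝ) (q : Fin 2 → Fin 2 → Fin 3 → ℝ) : Fin 2 → Fin 2 → E :=
  poissonSolution p fun i j => drift a h p α q i j - velocity a h p α q

/-- The harmonic coordinate of the random walk: its position shifted by the corrector, so that its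
mean displacement in one step is the same from every vertex. -/
def correctedPosition (a h p α : ℝ) (q : Fin 2 → Fin 2 → Fin 3 → ℝ) (x : E) : E :=
  x + ofType a h (corrector a h p α q) x

variable {a h p α : ℝ} {q : Fin 2 → Fin 2 → Fin 3 → ℝ}

-- The stationary law gives mass `1 / (2 * (2 - p))` to each type `(i, 0)` and mass
-- `(1 - p) / (2 * (2 - p))` to each type `(i, 1)`.
lemma smul_velocity (hp : p ≠ 2) (hq0 : ∀ i, q i 0 0 + q i 0 1 + q i 0 2 = 1 - p)
    (hq1 : ∀ i, q i 1 0 + q i 1 1 + q i 1 2 = 1) :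
    (2 * (2 - p)) • velocity a h p α q =
      drift a h p α q 0 0 + drift a h p α q 1 0 +
        (1 - p) • (drift a h p α q 0 1 + drift a h p α q 1 1) := by
  have hp2 : 2 - p ≠ 0 := sub_ne_zero.2 hp.symm
  have h0 (i : Fin 2) : q i 0 0 = 1 - p - q i 0 2 - q i 0 1 :=
    eq_sub_of_add_eq (eq_sub_of_add_eq (hq0 i))
  have h1 (i : Fin 2) : q i 1 0 = 1 - q i 1 2 - q i 1 1 :=
    eq_sub_of_add_eq (eq_sub_of_add_eq (hq1 i))
  refine ext_coords ?_ ?_ ?_ <;>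
    simp [velocity, drift, jumpProb, jump, Fin.sum_univ_five, w_eq, muG, mG, uu, vv, h0, h1] <;>
    field_simp <;> ring

lemma sum_jumpProb_smul {W : Type*} [AddCommGroup W] [Module ℝ W]
    (hq0 : ∀ i, q i 0 0 + q i 0 1 + q i 0 2 = 1 - p)
    (hq1 : ∀ i, q i 1 0 + q i 1 1 + q i 1 2 = 1) (i j : Fin 2) (g : Fin 2 → W) :
    ∑ k, jumpProb p α q i j k • g (jumpTarget j k) =
      if j = 0 then p • g 0 + (1 - p) • g 1 else g 0 := by
  fin_cases j
  · rw [← hq0 i]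
    simp [Fin.sum_univ_five, jumpProb, jumpTarget]
    module
  · simp [Fin.sum_univ_five, jumpProb, jumpTarget, ← add_smul, hq1]

lemma sum_jumpProb (hq0 : ∀ i, q i 0 0 + q i 0 1 + q i 0 2 = 1 - p)
    (hq1 : ∀ i, q i 1 0 + q i 1 1 + q i 1 2 = 1) (i j : Fin 2) :
    ∑ k, jumpProb p α q i j k = 1 := by
  simpa using sum_jumpProb_smul (α := α) hq0 hq1 i j fun _ => (1 : ℝ)

-- The first type index flips at every step; the second one goes from `0` to `0` with
-- probability `p` and from `1` to `0` with certainty.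
lemma add_poissonSolution {W : Type*} [AddCommGroup W] [Module ℝ W] (hp : p ≠ 0)
    {b : Fin 2 → Fin 2 → W} (hb : b 0 0 + b 1 0 + (1 - p) • (b 0 1 + b 1 1) = 0) (i j : Fin 2) :
    (b i j + if j = 0 then p • poissonSolution p b (1 - i) 0 +
      (1 - p) • poissonSolution p b (1 - i) 1 else poissonSolution p b (1 - i) 0) =
        poissonSolution p b i j := by
  set e := p⁻¹ • (b 0 0 + (1 - p) • b 1 1) with he
  have h00 : b 0 0 + (p • (0 : W) + (1 - p) • (b 1 1 + e)) = e := by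
    rw [he]
    match_scalars <;> field_simp <;> ring
  have h10 : b 1 0 + (p • e + (1 - p) • b 0 1) = 0 := by
    rw [he, smul_inv_smul₀ hp, ← hb]
    module
  fin_cases i <;> fin_cases j
  exacts [h00, add_zero _, h10, rfl]

lemma drift_add_sum_jumpProb_smul_corrector (hp0 : p ≠ 0) (hp2 : p ≠ 2)
    (hq0 : ∀ i, q i 0 0 + q i 0 1 + q i 0 2 = 1 - p)
    (hq1 : ∀ i, q i 1 0 + q i 1 1 + q i 1 2 = 1) (i j : Fin 2) :
    drift a h p α q i j +
        ∑ k, jumpProb p α q i j k • corrector a h p α q (1 - i) (jumpTarget j k) =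
      corrector a h p α q i j + velocity a h p α q := by
  have hv := smul_velocity (a := a) (h := h) (α := α) hp2 hq0 hq1
  rw [sum_jumpProb_smul hq0 hq1, ← sub_eq_iff_eq_add, add_sub_right_comm]
  refine add_poissonSolution
    (b := fun i j => drift a h p α q i j - velocity a h p α q) hp0 ?_ i j
  rw [← sub_eq_zero.2 hv.symm]
  module

lemma transition_correctedPosition (ha : a ≠ 0) (hh : h ≠ 0) (hp0 : p ≠ 0) (hp2 : p ≠ 2)
    (hq0 : ∀ i, q i 0 0 + q i 0 1 + q i 0 2 = 1 - p)
    (hq1 : ∀ i, q i 1 0 + q i 1 1 + q i 1 2 = 1) {i j : Fin 2} {x : E} (hx : x ∈ V a h i j)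
    (r : Fin 3) :
    transition a h p α q (fun y => correctedPosition a h p α q y r) x =
      correctedPosition a h p α q x r + velocity a h p α q r := by
  have hterm (k : Fin 5) :
      jumpProb p α q i j k • correctedPosition a h p α q (x + jump a h i k) =
        jumpProb p α q i j k • x + jumpProb p α q i j k • jump a h i k +
          jumpProb p α q i j k • corrector a h p α q (1 - i) (jumpTarget j k) := by
    by_cases hk : jumpProb p α q i j k = 0
    · simp [hk]
    · rw [correctedPosition, ofType_apply ha hh (add_jump_mem_V hx hk), smul_add, smul_add]
  have hsum : ∑ k, jumpProb p α q i j k • correctedPosition a h p α q (x + jump a h i k) =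
      correctedPosition a h p α q x + velocity a h p α q := by
    simp only [hterm, Finset.sum_add_distrib, ← Finset.sum_smul, sum_jumpProb hq0 hq1, one_smul]
    rw [← drift, add_assoc, drift_add_sum_jumpProb_smul_corrector hp0 hp2 hq0 hq1,
      correctedPosition, ofType_apply ha hh hx, add_assoc]
  rw [transition_eq_sum ha hh hx]
  simpa using congrArg (· r) hsum

lemma measurable_correctedPosition (a h p α : ℝ) (q : Fin 2 → Fin 2 → Fin 3 → ℝ) :
    Measurable (correctedPosition a h p α q) :=
  measurable_id.add (measurable_ofType a h _)

lemma exists_norm_correctedPosition_sub_le (ha : a ≠ 0) (hh : h ≠ 0) :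
    ∃ D, ∀ x y, IsEdge a h p α q x y →
      ‖correctedPosition a h p α q y - correctedPosition a h p α q x‖ ≤ D := by
  obtain ⟨D, hD⟩ := (finite_range fun t : Fin 2 × Fin 2 × Fin 5 =>
    ‖jump a h t.1 t.2.2 + (corrector a h p α q (1 - t.1) (jumpTarget t.2.1 t.2.2) -
      corrector a h p α q t.1 t.2.1)‖).bddAbove
  refine ⟨D, ?_⟩
  rintro x y ⟨i, j, k, hx, hk, rfl⟩
  rw [correctedPosition, correctedPosition, ofType_apply ha hh (add_jump_mem_V hx hk),
    ofType_apply ha hh hx, add_sub_add_comm, add_sub_cancel_left]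
  exact hD ⟨(i, j, k), rfl⟩

end Corrector

section Reachable

/-- The vertices that the random walk can occupy at time `n`. -/
def reachable (a h p α : ℝ) (q : Fin 2 → Fin 2 → Fin 3 → ℝ) : ℕ → Set E
  | 0 => {0}
  | n + 1 => ⋃ x ∈ reachable a h p α q n, {y | IsEdge a h p α q x y}

variable {a h p α : ℝ} {q : Fin 2 → Fin 2 → Fin 3 → ℝ}

lemma mem_reachable_succ {n : ℕ} {x y : E} (hx : x ∈ reachable a h p α q n)
    (hxy : IsEdge a h p α q x y) : y ∈ reachable a h p α q (n + 1) :=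
  mem_biUnion hx hxy

lemma finite_reachable (a h p α : ℝ) (q : Fin 2 → Fin 2 → Fin 3 → ℝ) (n : ℕ) :
    (reachable a h p α q n).Finite := by
  induction n with
  | zero => exact finite_singleton 0
  | succ n ih => exact ih.biUnion fun x _ => finite_setOf_isEdge a h p α q x

lemma exists_mem_V_of_mem_reachable {n : ℕ} {x : E} (hx : x ∈ reachable a h p α q n) :
    ∃ i j, x ∈ V a h i j := by
  cases n with
  | zero =>
    obtain rfl : x = 0 := hx
    exact ⟨0, 0, zero_mem_V a h⟩
  | succ n =>
    obtain ⟨y, -, i, j, k, hy, hk, rfl⟩ := mem_iUnion₂.1 hx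
    exact ⟨1 - i, jumpTarget j k, add_jump_mem_V hy hk⟩

lemma exists_abs_le_of_mem_reachable (a h p α : ℝ) (q : Fin 2 → Fin 2 → Fin 3 → ℝ) (n : ℕ)
    (f : E → ℝ) : ∃ C, ∀ x ∈ reachable a h p α q n, |f x| ≤ C := by
  obtain ⟨C, hC⟩ := ((finite_reachable a h p α q n).image fun x => |f x|).bddAbove
  exact ⟨C, fun x hx => hC ⟨x, hx, rfl⟩⟩

end Reachable

namespace IsRWG

variable {Ω : Type} [mΩ : MeasurableSpace Ω] {P : Measure Ω} {a h p α : ℝ}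
  {q : Fin 2 → Fin 2 → Fin 3 → ℝ} {S : ℕ → Ω → E} {F : ℕ → MeasurableSpace Ω}

lemma measurable_increment (H : IsRWG P a h p α q S F) {k n : ℕ} (hk : k < n) :
    Measurable[F n] fun ω => S (k + 1) ω - S k ω := by
  rw [H.hF n]
  exact (measurable_pi_apply (X := fun _ : Fin n => E) ⟨k, hk⟩).comp (comap_measurable _)

lemma measurable_walk (H : IsRWG P a h p α q S F) (n : ℕ) : Measurable[F n] (S n) := by
  have hsum : S n = fun ω => ∑ k ∈ Finset.range n, (S (k + 1) ω - S k ω) := by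
    ext1 ω
    rw [Finset.sum_range_sub (fun k => S k ω), H.hS0, sub_zero]
  rw [hsum]
  exact Finset.measurable_fun_sum _ fun k hk => H.measurable_increment (Finset.mem_range.1 hk)

/-- The natural filtration of the random walk. -/
def filtration (H : IsRWG P a h p α q S F) : Filtration ℕ mΩ where
  seq := F
  mono' n m hnm := by
    rw [H.hF n]
    exact (@measurable_pi_lambda _ _ _ (F m) _ _ fun k : Fin n =>
      H.measurable_increment (k.2.trans_le hnm)).comap_le
  le' n := by
    rw [H.hF n]
    exact (measurable_pi_lambda _ fun k : Fin n =>
      (H.hSmeas (k + 1)).sub (H.hSmeas k)).comap_le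

lemma ae_eq_zero_of_transition_eq_zero (H : IsRWG P a h p α q S F) {f : E → ℝ}
    (hf : Measurable f) (hf0 : 0 ≤ f) {C : ℝ} (hC : ∀ y, |f y| ≤ C) {x : E}
    (hx : transition a h p α q f x = 0) (n : ℕ) : ∀ᵐ ω ∂P, S n ω = x → f (S (n + 1) ω) = 0 := by
  have := H.prob
  have hs : MeasurableSet[F n] {ω | S n ω = x} := H.measurable_walk n (measurableSet_singleton x)
  have hsΩ : MeasurableSet {ω | S n ω = x} := H.filtration.le n _ hs
  have hint : Integrable (fun ω => f (S (n + 1) ω)) P :=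
    .of_bound (hf.comp (H.hSmeas (n + 1))).aestronglyMeasurable C (ae_of_all _ fun ω => hC _)
  have hcond : ∀ᵐ ω ∂P.restrict {ω | S n ω = x}, P[fun ω => f (S (n + 1) ω) | F n] ω = 0 := by
    rw [ae_restrict_iff' hsΩ]
    filter_upwards [H.hTrans n f hf ⟨C, hC⟩] with ω hω hSω
    exact hω.trans ((congrArg (transition a h p α q f) hSω).trans hx)
  exact (ae_restrict_iff' hsΩ).1 <| ae_restrict_eq_zero_of_condExp_eq_zero (H.filtration.le n) hint
    (fun ω => hf0 _) hs hcond

lemma ae_isEdge_of_eq (H : IsRWG P a h p α q S F) {i j : Fin 2} {x : E} (hx : x ∈ V a h i j)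
    (n : ℕ) : ∀ᵐ ω ∂P, S n ω = x → IsEdge a h p α q x (S (n + 1) ω) := by
  set f : E → ℝ := {y | IsEdge a h p α q x y}ᶜ.indicator 1
  have hf : Measurable f :=
    measurable_one.indicator (finite_setOf_isEdge a h p α q x).measurableSet.compl
  have hf0 : 0 ≤ f := indicator_nonneg fun _ _ => zero_le_one
  have hf1 (y : E) : |f y| ≤ 1 := by
    rw [abs_of_nonneg (hf0 y)]
    exact indicator_le_self' (fun _ _ => zero_le_one) y
  have hfx : transition a h p α q f x = 0 := by
    rw [transition_congr H.ha.ne' H.hh.ne' hx (g := 0)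
      fun y hy => indicator_of_notMem (not_not_intro hy) _,
      transition_eq_sum H.ha.ne' H.hh.ne' hx]
    simp
  filter_upwards [H.ae_eq_zero_of_transition_eq_zero hf hf0 hf1 hfx n] with ω hω hSω
  by_contra hedge
  exact one_ne_zero ((indicator_of_mem (f := (1 : E → ℝ)) hedge).symm.trans (hω hSω))

lemma ae_isEdge_of_mem_reachable (H : IsRWG P a h p α q S F) (n : ℕ) :
    ∀ᵐ ω ∂P, S n ω ∈ reachable a h p α q n → IsEdge a h p α q (S n ω) (S (n + 1) ω) := by
  have hae : ∀ᵐ ω ∂P, ∀ x ∈ reachable a h p α q n,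
      S n ω = x → IsEdge a h p α q x (S (n + 1) ω) := by
    refine (ae_ball_iff (finite_reachable a h p α q n).countable).2 fun x hx => ?_
    obtain ⟨i, j, hV⟩ := exists_mem_V_of_mem_reachable hx
    exact H.ae_isEdge_of_eq hV n
  filter_upwards [hae] with ω hω hSω
  exact hω _ hSω rfl

lemma ae_mem_reachable (H : IsRWG P a h p α q S F) (n : ℕ) :
    ∀ᵐ ω ∂P, S n ω ∈ reachable a h p α q n := by
  induction n with
  | zero => exact ae_of_all _ H.hS0
  | succ n ih =>
    filter_upwards [ih, H.ae_isEdge_of_mem_reachable n] with ω hω hedge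
    exact mem_reachable_succ hω (hedge hω)

lemma ae_isEdge (H : IsRWG P a h p α q S F) (n : ℕ) :
    ∀ᵐ ω ∂P, IsEdge a h p α q (S n ω) (S (n + 1) ω) := by
  filter_upwards [H.ae_mem_reachable n, H.ae_isEdge_of_mem_reachable n] with ω hω hedge
  exact hedge hω

lemma memLp_comp (H : IsRWG P a h p α q S F) {f : E → ℝ} (hf : Measurable f) (n : ℕ) :
    MemLp (fun ω => f (S n ω)) 2 P := by
  have := H.prob
  obtain ⟨C, hC⟩ := exists_abs_le_of_mem_reachable a h p α q n f
  refine MemLp.of_bound (hf.comp (H.hSmeas n)).aestronglyMeasurable C ?_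
  filter_upwards [H.ae_mem_reachable n] with ω hω
  exact hC _ hω

lemma condExp_comp_succ (H : IsRWG P a h p α q S F) {f : E → ℝ} (hf : Measurable f) (n : ℕ) :
    P[fun ω => f (S (n + 1) ω) | F n] =ᵐ[P] fun ω => transition a h p α q f (S n ω) := by
  set g : E → ℝ := (reachable a h p α q (n + 1)).indicator f with hg
  have hgm : Measurable g := hf.indicator (finite_reachable a h p α q (n + 1)).measurableSet
  have hgb : ∃ C, ∀ x, |g x| ≤ C := by
    obtain ⟨C, hC⟩ := exists_abs_le_of_mem_reachable a h p α q (n + 1) f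
    refine ⟨|C|, fun x => ?_⟩
    by_cases hx : x ∈ reachable a h p α q (n + 1)
    · rw [hg, indicator_of_mem hx]
      exact (hC x hx).trans (le_abs_self C)
    · rw [hg, indicator_of_notMem hx, abs_zero]
      exact abs_nonneg C
  have hfg : (fun ω => f (S (n + 1) ω)) =ᵐ[P] fun ω => g (S (n + 1) ω) := by
    filter_upwards [H.ae_mem_reachable (n + 1)] with ω hω
    rw [hg, indicator_of_mem hω]
  filter_upwards [condExp_congr_ae (m := F n) hfg, H.hTrans n g hgm hgb,
    H.ae_mem_reachable n] with ω hcond htrans hω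
  obtain ⟨i, j, hV⟩ := exists_mem_V_of_mem_reachable hω
  rw [hcond, htrans, transition_congr H.ha.ne' H.hh.ne' hV (g := g)
    fun y hy => (indicator_of_mem (mem_reachable_succ hω hy) f).symm]
  rfl

lemma martingale_comp_sub_mul (H : IsRWG P a h p α q S F) {f : E → ℝ} (hf : Measurable f) {c : ℝ}
    (hc : ∀ i j, ∀ x ∈ V a h i j, transition a h p α q f x = f x + c) :
    Martingale (fun n ω => f (S n ω) - n * c) H.filtration P := by
  have := H.prob
  have hint (n : ℕ) : Integrable (fun ω => f (S n ω)) P := (H.memLp_comp hf n).integrable one_le_two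
  refine martingale_nat
    (fun n => ((hf.comp (H.measurable_walk n)).sub_const _).stronglyMeasurable)
    (fun n => (hint n).sub (integrable_const _)) fun n => ?_
  filter_upwards [condExp_sub (hint (n + 1)) (integrable_const (((n + 1 : ℕ) : ℝ) * c)) (F n),
    H.condExp_comp_succ hf n, H.ae_mem_reachable n] with ω hsub hsucc hω
  obtain ⟨i, j, hV⟩ := exists_mem_V_of_mem_reachable hω
  refine Eq.trans ?_ hsub.symm
  rw [Pi.sub_apply, hsucc, condExp_const (m := F n) (H.filtration.le n), hc i j _ hV]
  push_cast
  ring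

theorem ae_tendsto_inv_mul_comp (H : IsRWG P a h p α q S F) {f : E → ℝ} (hf : Measurable f)
    {c D : ℝ} (hc : ∀ i j, ∀ x ∈ V a h i j, transition a h p α q f x = f x + c)
    (hD : ∀ x y, IsEdge a h p α q x y → |f y - f x| ≤ D) :
    ∀ᵐ ω ∂P, Tendsto (fun n : ℕ => (n : ℝ)⁻¹ * f (S n ω)) atTop (nhds c) := by
  have := H.prob
  have hincr (n : ℕ) : ∀ᵐ ω ∂P,
      |f (S (n + 1) ω) - (n + 1 : ℕ) * c - (f (S n ω) - n * c)| ≤ D + |c| := by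
    filter_upwards [H.ae_isEdge n] with ω hω
    calc |f (S (n + 1) ω) - (n + 1 : ℕ) * c - (f (S n ω) - n * c)|
        = |f (S (n + 1) ω) - f (S n ω) - c| := by
          congr 1
          push_cast
          ring
      _ ≤ |f (S (n + 1) ω) - f (S n ω)| + |c| := abs_sub _ _
      _ ≤ D + |c| := by gcongr; exact hD _ _ hω
  filter_upwards [ae_tendsto_inv_mul_of_martingale_of_bounded_increments
    (H.martingale_comp_sub_mul hf hc) (fun n => (H.memLp_comp hf n).sub (memLp_const _)) hincr]
    with ω hω
  refine (by simpa using hω.add_const c : Tendsto _ _ (nhds c)).congr' ?_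
  filter_upwards [eventually_ne_atTop 0] with n hn
  field_simp
  ring

theorem ae_tendsto_inv_smul_correctedPosition (H : IsRWG P a h p α q S F) (hp : p ≠ 0) :
    ∀ᵐ ω ∂P, Tendsto (fun n : ℕ => (n : ℝ)⁻¹ • correctedPosition a h p α q (S n ω)) atTop
      (nhds (velocity a h p α q)) := by
  have hp2 : p ≠ 2 := (H.hp1.trans_lt one_lt_two).ne
  obtain ⟨D, hD⟩ := exists_norm_correctedPosition_sub_le (p := p) (α := α) (q := q)
    H.ha.ne' H.hh.ne'
  have hcoord (r : Fin 3) : ∀ᵐ ω ∂P, Tendsto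
      (fun n : ℕ => (n : ℝ)⁻¹ * correctedPosition a h p α q (S n ω) r) atTop
      (nhds (velocity a h p α q r)) :=
    H.ae_tendsto_inv_mul_comp (f := fun x => correctedPosition a h p α q x r)
      ((EuclideanSpace.proj (𝕜 := ℝ) r).measurable.comp (measurable_correctedPosition a h p α q))
      (fun i j x hx => transition_correctedPosition H.ha.ne' H.hh.ne' hp hp2 H.hqsum0 H.hqsum1
        hx r)
      fun x y hxy => (PiLp.norm_apply_le _ r).trans (hD x y hxy)
  filter_upwards [ae_all_iff.2 hcoord] with ω hω
  exact ((PiLp.continuous_toLp 2 fun _ : Fin 3 => ℝ).tendsto _).comp (tendsto_pi_nhds.2 hω)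

end IsRWG

lemma tendsto_inv_smul_ofType {W : Type*} [NormedAddCommGroup W] [NormedSpace ℝ W] (a h : ℝ)
    (g : Fin 2 → Fin 2 → W) (x : ℕ → E) :
    Tendsto (fun n : ℕ => (n : ℝ)⁻¹ • ofType a h g (x n)) atTop (nhds 0) := by
  have hbdd (y : E) : ‖ofType a h g y‖ ≤ ∑ i, ∑ j, ‖g i j‖ :=
    norm_sum_le_of_le _ fun i _ => norm_sum_le_of_le _ fun j _ => norm_indicator_le_norm_self _ y
  exact (tendsto_inv_atTop_nhds_zero_nat (𝕜 := ℝ)).zero_smul_isBoundedUnder_le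
    (isBoundedUnder_of ⟨_, fun n => hbdd (x n)⟩)

end RWG

theorem rwg_slln {Ω : Type} [MeasurableSpace Ω] (P : Measure Ω)
    (a h p α : ℝ) (q : Fin 2 → Fin 2 → Fin 3 → ℝ)
    (S : ℕ → Ω → RWG.E) (F : ℕ → MeasurableSpace Ω)
    (hRW : RWG.IsRWG P a h p α q S F) (hp : 0 < p) :
    ∀ᵐ ω ∂P, Tendsto (fun n : ℕ => (n : ℝ)⁻¹ • S n ω) atTop
      (nhds (RWG.muG a h p α q + (p / (2 - p)) • RWG.mG a h p α q)) := by
  filter_upwards [hRW.ae_tendsto_inv_smul_correctedPosition hp.ne'] with ω hω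
  have hcorr := RWG.tendsto_inv_smul_ofType a h (RWG.corrector a h p α q) fun n => S n ω
  simpa [RWG.correctedPosition, RWG.velocity] using hω.sub hcorr
end
end
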